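/- arXiv:1010.5144 — 2 statements merged into one kernel-verified Lean document; each statement's English description precedes it below -/
import Mathlib

section
/- Let G be a connected graph of order n₁ ≥ 2 and let H be a graph of order n₂ ≥ 2. Then pd(G⊙H) ≤ (1/n₁)·dim(G⊙H) + pd(G) + 1. -/
/-!
Both dimensions of the corona are compared with the adjacency dimension `adjDim H` of the second
factor, where the vertices of `H` are told apart by `min {d, 2}` instead of `d`.

A vertex outside the `i`-th copy of `H` is equidistant from all vertices of that copy, and inside
the copy the distances of `G ⊙ H` are `min {d, 2}`. Hence a resolving set of `G ⊙ H` meets each of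
the `n₁` copies in an adjacency-resolving set of `H`, and `n₁ * adjDim H ≤ dim (G ⊙ H)`.

Conversely, let `B` be an adjacency-resolving set of `H`. Partition `G ⊙ H` into the cells of a
resolving partition of `G`, the layers `V × {b}` for `b ∈ B`, and the remainder `V × (W \ B)`. The
distances to the cells of the first kind determine the copy of `H` that contains a vertex, and the
distances to the layers, each attained in that copy, determine its place there. Hence
`pd (G ⊙ H) ≤ pd G + adjDim H + 1`.
-/

open SimpleGraph

/-- The corona product `G ⊙ H`: one copy of `G`, one copy of `H` for each vertex of `G`,
with the `i`-th vertex of `G` joined to every vertex of the `i`-th copy of `H`. -/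
def corona {α β : Type*} (G : SimpleGraph α) (H : SimpleGraph β) :
    SimpleGraph (α ⊕ α × β) :=
  SimpleGraph.fromRel (fun x y =>
    match x, y with
    | Sum.inl a, Sum.inl b => G.Adj a b
    | Sum.inl a, Sum.inr iu => a = iu.1
    | Sum.inr iu, Sum.inr jw => iu.1 = jw.1 ∧ H.Adj iu.2 jw.2
    | _, _ => False)

/-- The distance from a vertex to a set of vertices: `d(v,A) = min_{u ∈ A} d(v,u)`. -/
noncomputable def setDist {α : Type*} (G : SimpleGraph α) (v : α) (A : Set α) : ℕ :=
  sInf (G.dist v '' A)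

/-- `S` is a resolving set for `G`: distinct vertices have distinct metric representations. -/
def IsResolvingSet {α : Type*} (G : SimpleGraph α) (S : Set α) : Prop :=
  ∀ u v : α, (∀ w ∈ S, G.dist u w = G.dist v w) → u = v

/-- The metric dimension of `G`: minimum cardinality of a resolving set. -/
noncomputable def metricDim {α : Type*} (G : SimpleGraph α) : ℕ :=
  sInf {k | ∃ S : Set α, IsResolvingSet G S ∧ S.ncard = k}

/-- A family of sets is a resolving partition for `G` if it is a partition of the vertex set
into nonempty cells and distinct vertices have distinct partition representations. -/
def IsResolvingPartition {α : Type*} (G : SimpleGraph α) (P : Set (Set α)) : Prop :=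
  (∀ A ∈ P, A.Nonempty) ∧ (∀ v : α, ∃! A : Set α, A ∈ P ∧ v ∈ A) ∧
    ∀ u v : α, (∀ A ∈ P, setDist G u A = setDist G v A) → u = v

/-- The partition dimension of `G`: minimum number of cells in a resolving partition. -/
noncomputable def partitionDim {α : Type*} (G : SimpleGraph α) : ℕ :=
  sInf {t | ∃ P : Set (Set α), IsResolvingPartition G P ∧ P.ncard = t}

/-- `c(H)`: the maximum cardinality of a connected component of `H` which is isomorphic to a
complete graph (i.e. whose vertex set is a clique). -/
noncomputable def maxCompleteComp {β : Type*} (H : SimpleGraph β) : ℕ :=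
  sSup {k | ∃ C : H.ConnectedComponent, H.IsClique C.supp ∧ C.supp.ncard = k}

/-- `β(H)`: the number of isolated vertices of `H`. -/
noncomputable def numIsolated {β : Type*} (H : SimpleGraph β) : ℕ :=
  Set.ncard {v : β | ∀ u, ¬ H.Adj v u}

/-- `α(H)`: the number of connected components of `H` of order greater than one. -/
noncomputable def numBigComp {β : Type*} (H : SimpleGraph β) : ℕ :=
  Set.ncard {C : H.ConnectedComponent | 1 < C.supp.ncard}

namespace corona

variable {V W : Type*} {G : SimpleGraph V} {H : SimpleGraph W} {i j : V} {u w : W}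

@[simp]
lemma adj_inl_inl : (corona G H).Adj (Sum.inl i) (Sum.inl j) ↔ G.Adj i j := by
  simp only [corona, fromRel_adj, ne_eq, Sum.inl.injEq, G.adj_comm j i, or_self]
  exact ⟨And.right, fun h => ⟨h.ne, h⟩⟩

@[simp]
lemma adj_inl_inr : (corona G H).Adj (Sum.inl i) (Sum.inr (j, w)) ↔ i = j := by
  simp [corona]

@[simp]
lemma adj_inr_inl : (corona G H).Adj (Sum.inr (j, w)) (Sum.inl i) ↔ i = j := by
  rw [adj_comm, adj_inl_inr]

@[simp]
lemma adj_inr_inr :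
    (corona G H).Adj (Sum.inr (i, u)) (Sum.inr (j, w)) ↔ i = j ∧ H.Adj u w := by
  simp only [corona, fromRel_adj, ne_eq, Sum.inr.injEq, Prod.mk.injEq, H.adj_comm w u,
    eq_comm (a := j), or_self]
  exact ⟨And.right, fun h => ⟨fun e => h.2.ne e.2, h⟩⟩

/-- The inclusion of `G` into the corona `G ⊙ H`. -/
def inlHom (G : SimpleGraph V) (H : SimpleGraph W) : G →g corona G H :=
  ⟨Sum.inl, adj_inl_inl.2⟩

/-- The projection of the corona `G ⊙ H` onto the vertices of `G`, which contracts each copy of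
`H` to the vertex it is attached to. -/
def base : V ⊕ V × W → V :=
  Sum.elim id Prod.fst

lemma base_eq_or_adj {x y : V ⊕ V × W} (h : (corona G H).Adj x y) :
    base x = base y ∨ G.Adj (base x) (base y) := by
  rcases x with i | ⟨i, u⟩ <;> rcases y with j | ⟨j, w⟩ <;> simp_all [base]

lemma exists_walk_base_length_le {x y : V ⊕ V × W} (p : (corona G H).Walk x y) :
    ∃ q : G.Walk (base x) (base y), q.length ≤ p.length := by
  induction p with
  | nil => exact ⟨.nil, le_rfl⟩
  | cons h p ih =>
    obtain ⟨q, hq⟩ := ih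
    rcases base_eq_or_adj h with e | e
    · exact ⟨q.copy e.symm rfl, by simpa using hq.trans (Nat.le_succ _)⟩
    · exact ⟨q.cons e, by simpa using hq⟩

lemma edist_inl_inl (i j : V) :
    (corona G H).edist (Sum.inl i) (Sum.inl j) = G.edist i j := by
  apply le_antisymm
  · refine le_iInf fun p => ?_
    exact (p.map (inlHom G H)).edist_le.trans (by simp)
  · refine le_iInf fun p => ?_
    obtain ⟨q, hq⟩ := exists_walk_base_length_le p
    exact q.edist_le.trans (by exact_mod_cast hq)

/-- The `i`-th vertex of `G` separates the `i`-th copy of `H` from the rest of the corona. -/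
lemma exists_walk_inl_length_lt {x y : V ⊕ V × W} (p : (corona G H).Walk x y)
    (hx : x = Sum.inr (i, u)) (hy : ∀ w, y ≠ Sum.inr (i, w)) :
    ∃ q : (corona G H).Walk (Sum.inl i) y, q.length < p.length := by
  induction p generalizing u with
  | nil => exact absurd hx (hy u)
  | @cons _ z _ h p ih =>
    subst hx
    rcases z with j | ⟨j, w⟩
    · obtain rfl := adj_inr_inl.1 h
      exact ⟨p, by simp⟩
    · obtain ⟨rfl, -⟩ := adj_inr_inr.1 h
      obtain ⟨q, hq⟩ := ih rfl hy
      exact ⟨q, by simpa using hq.trans (Nat.lt_succ_self _)⟩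

lemma edist_inr_of_ne (u : W) {y : V ⊕ V × W} (hy : ∀ w, y ≠ Sum.inr (i, w)) :
    (corona G H).edist (Sum.inr (i, u)) y = (corona G H).edist (Sum.inl i) y + 1 := by
  apply le_antisymm
  · calc (corona G H).edist (Sum.inr (i, u)) y
        ≤ (corona G H).edist (Sum.inr (i, u)) (Sum.inl i) + (corona G H).edist (Sum.inl i) y :=
          SimpleGraph.edist_triangle
      _ = (corona G H).edist (Sum.inl i) y + 1 := by
          rw [edist_eq_one_iff_adj.2 (adj_inr_inl.2 rfl), add_comm]
  · refine le_iInf fun p => ?_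
    obtain ⟨q, hq⟩ := exists_walk_inl_length_lt p rfl hy
    calc (corona G H).edist (Sum.inl i) y + 1 ≤ q.length + 1 := by gcongr; exact q.edist_le
      _ ≤ p.length := by exact_mod_cast hq

lemma connected (hG : G.Connected) : (corona G H).Connected := by
  obtain ⟨i⟩ := hG.nonempty
  have reachable_inl (j : V) : (corona G H).Reachable (Sum.inl i) (Sum.inl j) :=
    (hG i j).map (inlHom G H)
  refine (connected_iff_exists_forall_reachable _).2 ⟨Sum.inl i, ?_⟩
  rintro (j | ⟨j, w⟩)
  · exact reachable_inl j
  · exact (reachable_inl j).trans (adj_inl_inr.2 rfl).reachable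

lemma dist_inl_inl (i j : V) : (corona G H).dist (Sum.inl i) (Sum.inl j) = G.dist i j :=
  congrArg ENat.toNat (edist_inl_inl i j)

lemma dist_inr_of_ne (hG : G.Connected) (u : W) {y : V ⊕ V × W}
    (hy : ∀ w, y ≠ Sum.inr (i, w)) :
    (corona G H).dist (Sum.inr (i, u)) y = (corona G H).dist (Sum.inl i) y + 1 := by
  have hconn := connected (H := H) hG
  have h := edist_inr_of_ne (G := G) (H := H) u hy
  rw [← (hconn _ _).coe_dist_eq_edist, ← (hconn _ _).coe_dist_eq_edist] at h
  exact_mod_cast h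

lemma dist_inr_inl (hG : G.Connected) (i : V) (u : W) (j : V) :
    (corona G H).dist (Sum.inr (i, u)) (Sum.inl j) = G.dist i j + 1 := by
  rw [dist_inr_of_ne hG u (by simp), dist_inl_inl]

lemma dist_inr_inr_of_ne (hG : G.Connected) (hij : i ≠ j) (u w : W) :
    (corona G H).dist (Sum.inr (i, u)) (Sum.inr (j, w)) = G.dist i j + 2 := by
  rw [dist_inr_of_ne hG u (by simp [hij.symm]), dist_comm, dist_inr_inl hG, dist_comm]

end corona

section Adjacency

variable {V W : Type*} {H : SimpleGraph W}

/-- The adjacency metric `min {d, 2}` of a graph, `d` being the (possibly infinite) distance. -/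
noncomputable def adjDist (H : SimpleGraph W) (u w : W) : ℕ :=
  open Classical in if u = w then 0 else if H.Adj u w then 1 else 2

/-- `B` is an adjacency-resolving set (adjacency generator) of `H`: distinct vertices are
distinguished by their adjacency metric to some vertex of `B`. -/
def IsAdjResolvingSet (H : SimpleGraph W) (B : Set W) : Prop :=
  ∀ u w : W, (∀ b ∈ B, adjDist H u b = adjDist H w b) → u = w

/-- The adjacency dimension of `H`: minimum cardinality of an adjacency-resolving set. -/
noncomputable def adjDim (H : SimpleGraph W) : ℕ :=
  sInf {k | ∃ B : Set W, IsAdjResolvingSet H B ∧ B.ncard = k}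

lemma adjDist_le_two (u w : W) : adjDist H u w ≤ 2 := by
  unfold adjDist
  split_ifs <;> simp

lemma adjDist_eq_zero_iff {u w : W} : adjDist H u w = 0 ↔ u = w := by
  unfold adjDist
  split_ifs <;> simp_all

lemma isAdjResolvingSet_univ : IsAdjResolvingSet H Set.univ := fun _ w h =>
  adjDist_eq_zero_iff.1 ((h w trivial).trans (adjDist_eq_zero_iff.2 rfl))

lemma exists_isAdjResolvingSet_ncard (H : SimpleGraph W) :
    ∃ B : Set W, IsAdjResolvingSet H B ∧ B.ncard = adjDim H :=
  Nat.sInf_mem (s := {k | ∃ B : Set W, IsAdjResolvingSet H B ∧ B.ncard = k})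
    ⟨_, Set.univ, isAdjResolvingSet_univ, rfl⟩

lemma IsAdjResolvingSet.adjDim_le {B : Set W} (hB : IsAdjResolvingSet H B) :
    adjDim H ≤ B.ncard :=
  Nat.sInf_le ⟨B, hB, rfl⟩

lemma corona.dist_inr_inr_self {G : SimpleGraph V} (i : V) (u w : W) :
    (corona G H).dist (Sum.inr (i, u)) (Sum.inr (i, w)) = adjDist H u w := by
  unfold adjDist
  split_ifs with huw hadj
  · rw [huw, dist_self]
  · exact dist_eq_one_iff_adj.2 (adj_inr_inr.2 ⟨rfl, hadj⟩)
  · have h : (corona G H).edist (Sum.inr (i, u)) (Sum.inr (i, w)) = 2 :=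
      edist_eq_two_iff.2 ⟨by simpa, by simpa, Sum.inl i, by simp [mem_commonNeighbors]⟩
    exact congrArg ENat.toNat h

end Adjacency

section MetricDimension

variable {α V W : Type*} {G : SimpleGraph V} {H : SimpleGraph W}

lemma isResolvingSet_univ {G : SimpleGraph α} (hG : G.Connected) :
    IsResolvingSet G Set.univ := fun _ v h =>
  hG.dist_eq_zero_iff.1 ((h v trivial).trans dist_self)

lemma exists_isResolvingSet_ncard {G : SimpleGraph α} (hG : G.Connected) :
    ∃ S : Set α, IsResolvingSet G S ∧ S.ncard = metricDim G :=
  Nat.sInf_mem (s := {k | ∃ S : Set α, IsResolvingSet G S ∧ S.ncard = k})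
    ⟨_, Set.univ, isResolvingSet_univ hG, rfl⟩

lemma IsResolvingSet.isAdjResolvingSet_preimage (hG : G.Connected) {S : Set (V ⊕ V × W)}
    (hS : IsResolvingSet (corona G H) S) (i : V) :
    IsAdjResolvingSet H ((fun w => Sum.inr (i, w)) ⁻¹' S) := by
  intro u w h
  suffices (Sum.inr (i, u) : V ⊕ V × W) = Sum.inr (i, w) by simpa using this
  refine hS _ _ fun z hz => ?_
  by_cases hcopy : ∃ t, z = Sum.inr (i, t)
  · obtain ⟨t, rfl⟩ := hcopy
    rw [corona.dist_inr_inr_self, corona.dist_inr_inr_self, h t hz]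
  · rw [not_exists] at hcopy
    rw [corona.dist_inr_of_ne hG u hcopy, corona.dist_inr_of_ne hG w hcopy]

lemma sum_ncard_preimage_inr_le [Fintype V] [Finite W] (S : Set (V ⊕ V × W)) :
    ∑ i, ((fun w => Sum.inr (i, w)) ⁻¹' S : Set W).ncard ≤ S.ncard := by
  simp only [← Nat.card_coe_set_eq, ← Nat.card_sigma]
  refine Nat.card_le_card_of_injective (fun x => ⟨Sum.inr (x.1, x.2), x.2.2⟩) ?_
  rintro ⟨i, u, hu⟩ ⟨j, w, hw⟩ h
  obtain ⟨rfl, rfl⟩ : i = j ∧ u = w := by simpa using h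
  rfl

theorem card_mul_adjDim_le_metricDim_corona [Fintype V] [Finite W] (hG : G.Connected) :
    Fintype.card V * adjDim H ≤ metricDim (corona G H) := by
  obtain ⟨S, hS, hcard⟩ := exists_isResolvingSet_ncard (corona.connected (H := H) hG)
  calc Fintype.card V * adjDim H = ∑ _i : V, adjDim H := by simp
    _ ≤ ∑ i, ((fun w => Sum.inr (i, w)) ⁻¹' S : Set W).ncard :=
      Finset.sum_le_sum fun i _ => (hS.isAdjResolvingSet_preimage hG i).adjDim_le
    _ ≤ S.ncard := sum_ncard_preimage_inr_le S
    _ = metricDim (corona G H) := hcard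

end MetricDimension

section ResolvingColoring

variable {α ι : Type*} {G : SimpleGraph α} {f : α → ι}

/-- A map `f` whose fibres distinguish the vertices of `G` by their distances. The nonempty fibres
then form a resolving partition; allowing empty fibres avoids any surjectivity requirement. -/
def IsResolvingColoring (G : SimpleGraph α) (f : α → ι) : Prop :=
  ∀ u v : α, (∀ c, setDist G u (f ⁻¹' {c}) = setDist G v (f ⁻¹' {c})) → u = v

lemma setDist_empty (v : α) : setDist G v ∅ = 0 := by
  simp [setDist]

lemma setDist_eq_zero_iff (hG : G.Connected) {v : α} {A : Set α} (hA : A.Nonempty) :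
    setDist G v A = 0 ↔ v ∈ A := by
  simp [setDist, Nat.sInf_eq_zero, hG.dist_eq_zero_iff, hA.ne_empty]

lemma color_eq_of_setDist_eq (hG : G.Connected) {u v : α}
    (h : setDist G u (f ⁻¹' {f v}) = setDist G v (f ⁻¹' {f v})) : f u = f v := by
  have hne : (f ⁻¹' {f v}).Nonempty := ⟨v, rfl⟩
  exact (setDist_eq_zero_iff hG hne).1 (h.trans ((setDist_eq_zero_iff hG hne).2 rfl))

lemma isResolvingColoring_id (hG : G.Connected) : IsResolvingColoring G id := fun _ v h =>
  color_eq_of_setDist_eq (f := id) hG (h v)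

lemma IsResolvingColoring.isResolvingPartition_classes (hf : IsResolvingColoring G f) :
    IsResolvingPartition G (Setoid.ker f).classes := by
  have hpart := Setoid.isPartition_classes (Setoid.ker f)
  refine ⟨fun A hA => Setoid.nonempty_of_mem_partition hpart hA, hpart.2, fun u v h => ?_⟩
  refine hf u v fun c => ?_
  rcases (f ⁻¹' {c}).eq_empty_or_nonempty with hc | ⟨x, rfl⟩
  · rw [hc, setDist_empty, setDist_empty]
  · exact h _ (Setoid.mem_classes (Setoid.ker f) x)

lemma IsResolvingColoring.partitionDim_le [Finite ι] (hf : IsResolvingColoring G f) :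
    partitionDim G ≤ Nat.card ι := by
  have := Fintype.ofFinite ι
  have := (Setoid.finite_classes_ker f).fintype
  calc partitionDim G ≤ (Setoid.ker f).classes.ncard :=
        Nat.sInf_le ⟨_, hf.isResolvingPartition_classes, rfl⟩
    _ ≤ Nat.card ι := by
        rw [← Nat.card_coe_set_eq, Nat.card_eq_fintype_card, Nat.card_eq_fintype_card]
        exact Setoid.card_classes_ker_le f

lemma exists_isResolvingPartition_ncard (hG : G.Connected) :
    ∃ P : Set (Set α), IsResolvingPartition G P ∧ P.ncard = partitionDim G :=
  Nat.sInf_mem (s := {t | ∃ P : Set (Set α), IsResolvingPartition G P ∧ P.ncard = t})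
    ⟨_, (Setoid.ker id).classes, (isResolvingColoring_id hG).isResolvingPartition_classes, rfl⟩

lemma IsResolvingPartition.exists_isResolvingColoring {P : Set (Set α)}
    (hP : IsResolvingPartition G P) : ∃ f : α → P, IsResolvingColoring G f := by
  obtain ⟨-, hpart, hres⟩ := hP
  choose cell hcell hunique using hpart
  let f (v : α) : P := ⟨cell v, (hcell v).1⟩
  have preimage_f (A : P) : f ⁻¹' {A} = A := by
    ext v
    refine Subtype.ext_iff.trans ⟨fun h => ?_, fun h => (hunique v A ⟨A.2, h⟩).symm⟩
    exact h ▸ (hcell v).2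
  refine ⟨f, fun u v h => hres u v fun A hA => ?_⟩
  simpa only [preimage_f] using h ⟨A, hA⟩

end ResolvingColoring

section PartitionDimension

variable {V W ι : Type*} {G : SimpleGraph V} {H : SimpleGraph W}

namespace corona

lemma setDist_inl_image (i : V) (A : Set V) :
    setDist (corona G H) (Sum.inl i) (Sum.inl '' A) = setDist G i A := by
  simp only [setDist, Set.image_image, dist_inl_inl]

lemma setDist_inr_image (hG : G.Connected) (i : V) (u : W) {A : Set V} (hA : A.Nonempty) :
    setDist (corona G H) (Sum.inr (i, u)) (Sum.inl '' A) = setDist G i A + 1 := by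
  have hmono : Monotone fun n : ℕ => n + 1 := fun _ _ h => Nat.succ_le_succ h
  simp only [setDist, hmono.map_csInf (hA.image _), Set.image_image, dist_inr_inl hG]

lemma setDist_layer (hG : G.Connected) (i : V) (u b : W) :
    setDist (corona G H) (Sum.inr (i, u)) (Set.range fun j => Sum.inr (j, b)) =
      adjDist H u b := by
  rw [setDist, ← Set.range_comp]
  refine IsLeast.csInf_eq ⟨⟨i, dist_inr_inr_self i u b⟩, ?_⟩
  rintro _ ⟨j, rfl⟩
  rw [Function.comp_apply]
  rcases eq_or_ne i j with rfl | hij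
  · rw [dist_inr_inr_self]
  · rw [dist_inr_inr_of_ne hG hij]
    exact (adjDist_le_two u b).trans (Nat.le_add_left _ _)

/-- The colouring of the corona `G ⊙ H` which extends a colouring `f` of `G` by a colour
`some b` for each layer `V × {b}`, `b ∈ B`, and the colour `none` for `V × (W \ B)`. -/
noncomputable def extendColoring (f : V → ι) (B : Set W) : V ⊕ V × W → ι ⊕ Option B :=
  open Classical in Sum.map f fun x => if h : x.2 ∈ B then some ⟨x.2, h⟩ else none

lemma extendColoring_preimage_inl (f : V → ι) (B : Set W) (c : ι) :
    extendColoring f B ⁻¹' {Sum.inl c} = Sum.inl '' (f ⁻¹' {c}) := by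
  ext (i | x) <;> simp [extendColoring]

lemma extendColoring_preimage_some (f : V → ι) {B : Set W} (b : B) :
    extendColoring f B ⁻¹' {Sum.inr (some b)} = Set.range fun i => Sum.inr (i, (b : W)) := by
  ext (i | ⟨i, w⟩)
  · simp [extendColoring]
  · obtain ⟨b, hb⟩ := b
    by_cases hw : w ∈ B
    · simp [extendColoring, hw, eq_comm]
    · simp [extendColoring, hw, ne_of_mem_of_not_mem hb hw]

lemma isResolvingColoring_extendColoring (hG : G.Connected) {f : V → ι}
    (hf : IsResolvingColoring G f) {B : Set W} (hB : IsAdjResolvingSet H B) :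
    IsResolvingColoring (corona G H) (extendColoring f B) := by
  intro x y h
  have hfib (c : ι) := h (Sum.inl c)
  have hcolor := color_eq_of_setDist_eq (connected hG) (h (extendColoring f B y))
  simp only [extendColoring_preimage_inl] at hfib
  rcases x with i | ⟨i, u⟩ <;> rcases y with j | ⟨j, w⟩
  · simp only [setDist_inl_image] at hfib
    rw [hf i j hfib]
  · simp [extendColoring] at hcolor
  · simp [extendColoring] at hcolor
  · have hij : i = j := hf i j fun c => by
      rcases (f ⁻¹' {c}).eq_empty_or_nonempty with hc | hc
      · rw [hc, setDist_empty, setDist_empty]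
      · simpa only [setDist_inr_image hG _ _ hc, Nat.add_right_cancel_iff] using hfib c
    have huw : u = w := hB u w fun b hb => by
      simpa only [extendColoring_preimage_some, setDist_layer hG] using h (Sum.inr (some ⟨b, hb⟩))
    rw [hij, huw]

end corona

theorem partitionDim_corona_le [Finite V] [Finite W] (hG : G.Connected) :
    partitionDim (corona G H) ≤ partitionDim G + adjDim H + 1 := by
  obtain ⟨P, hP, hPcard⟩ := exists_isResolvingPartition_ncard hG
  obtain ⟨f, hf⟩ := hP.exists_isResolvingColoring
  obtain ⟨B, hB, hBcard⟩ := exists_isAdjResolvingSet_ncard H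
  calc partitionDim (corona G H) ≤ Nat.card (P ⊕ Option B) :=
        (corona.isResolvingColoring_extendColoring hG hf hB).partitionDim_le
    _ = partitionDim G + adjDim H + 1 := by
        rw [Nat.card_sum, Finite.card_option, Nat.card_coe_set_eq, Nat.card_coe_set_eq, hPcard,
          hBcard, add_assoc]

end PartitionDimension

/-- For a connected graph `G` of order `n₁ ≥ 2` and a graph `H` of order `n₂ ≥ 2`,
`pd(G⊙H) ≤ (1/n₁)·dim(G⊙H) + pd(G) + 1`. -/
theorem stmt0 {V W : Type*} [Fintype V] [Fintype W] (G : SimpleGraph V) (H : SimpleGraph W)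
    (n₁ n₂ : ℕ) (hn₁ : Fintype.card V = n₁) (hn₂ : Fintype.card W = n₂)
    (h₁ : 2 ≤ n₁) (h₂ : 2 ≤ n₂) (hG : G.Connected) :
    (partitionDim (corona G H) : ℝ) ≤
      (1 / (n₁ : ℝ)) * metricDim (corona G H) + partitionDim G + 1 := by
  have hpos : (0 : ℝ) < n₁ := by exact_mod_cast zero_lt_two.trans_le h₁
  have hdim : (n₁ : ℝ) * adjDim H ≤ metricDim (corona G H) := by
    exact_mod_cast hn₁ ▸ card_mul_adjDim_le_metricDim_corona (H := H) hG
  have hpd : (partitionDim (corona G H) : ℝ) ≤ partitionDim G + adjDim H + 1 := by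
    exact_mod_cast partitionDim_corona_le (H := H) hG
  calc (partitionDim (corona G H) : ℝ)
      ≤ adjDim H + partitionDim G + 1 := by linarith only [hpd]
    _ ≤ (1 / (n₁ : ℝ)) * metricDim (corona G H) + partitionDim G + 1 := by
        gcongr
        rwa [one_div_mul_eq_div, le_div_iff₀' hpos]
end

section
/- Let G and H be connected graphs of order n₁ ≥ 2 and n₂ ≥ 2, respectively. If the diameter of H is at most 2, then pd(G⊙H) ≤ pd(G) + pd(H). -/
/-!
Take minimum resolving partitions `P` of `G` and `Q` of `H`, and partition `G ⊙ H` into the cells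
`A ∈ P` of the copy of `G` and, for each `B ∈ Q`, the union of the copies of `B` over all copies
of `H`. The distance from `a` to `A` is `d(a, A)`, and from the vertex `(a, u)` of the `a`-th copy
of `H` it is `d(a, A) + 1`. Vertices of the same copy of `H` are at distance `min (d(u, w)) 2`,
vertices of different copies at distance at least `2`, so the distance from `(a, u)` to the copies
of `B` is `min (d(u, B)) 2`, which is `d(u, B)` when `H` has diameter at most `2`. Thus a vertex of
`G` is told apart from any vertex of a copy of `H` by its own cell, two vertices of `G`, or of
different copies of `H`, by the cells from `P`, and two vertices of one copy by the cells from `Q`.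
-/

open SimpleGraph

section Distance

variable {α β : Type*} {K : SimpleGraph α} {L : SimpleGraph β}

lemma dist_map_le (f : K →g L) {x y : α} (h : K.Reachable x y) :
    L.dist (f x) (f y) ≤ K.dist x y := by
  obtain ⟨p, hp⟩ := h.exists_walk_length_eq_dist
  rw [← hp, ← p.length_map f]
  exact dist_le _

lemma le_add_dist_of_forall_adj {f : α → ℕ} (hf : ∀ x y, K.Adj x y → f x ≤ f y + 1) {x y : α}
    (h : K.Reachable x y) : f x ≤ f y + K.dist x y := by
  have le_add_length : ∀ {x y : α} (p : K.Walk x y), f x ≤ f y + p.length := by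
    intro x y p
    induction p with
    | nil => simp
    | cons hadj p ih =>
      have := hf _ _ hadj
      rw [Walk.length_cons]
      lia
  obtain ⟨p, hp⟩ := h.exists_walk_length_eq_dist
  exact hp ▸ le_add_length p

lemma setDist_le_dist {x y : α} {A : Set α} (hy : y ∈ A) : setDist K x A ≤ K.dist x y :=
  Nat.sInf_le ⟨y, hy, rfl⟩

lemma exists_dist_eq_setDist (x : α) {A : Set α} (hA : A.Nonempty) :
    ∃ y ∈ A, K.dist x y = setDist K x A :=
  Nat.sInf_mem (hA.image (K.dist x))

lemma le_setDist_iff {x : α} {A : Set α} (hA : A.Nonempty) {n : ℕ} :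
    n ≤ setDist K x A ↔ ∀ y ∈ A, n ≤ K.dist x y := by
  rw [setDist, le_csInf_iff (OrderBot.bddBelow _) (hA.image _), Set.forall_mem_image]

lemma mem_of_setDist_eq (hK : K.Connected) {x y : α} {A : Set α} (hx : x ∈ A)
    (h : setDist K x A = setDist K y A) : y ∈ A := by
  obtain ⟨z, hz, hyz⟩ := exists_dist_eq_setDist (K := K) y ⟨x, hx⟩
  have hx0 : setDist K x A = 0 := by simpa using setDist_le_dist (K := K) (x := x) hx
  rwa [hK.dist_eq_zero_iff.1 (hyz.trans (h.symm.trans hx0))]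

end Distance

section ResolvingPartition

variable {α : Type*} {K : SimpleGraph α} {P : Set (Set α)}

lemma isResolvingPartition_iff : IsResolvingPartition K P ↔
    Setoid.IsPartition P ∧ ∀ u v, (∀ A ∈ P, setDist K u A = setDist K v A) → u = v := by
  have forall_nonempty_iff : (∀ A ∈ P, A.Nonempty) ↔ ∅ ∉ P :=
    ⟨fun h hempty => Set.not_nonempty_empty (h ∅ hempty),
      fun h A hA => Set.nonempty_iff_ne_empty.2 (ne_of_mem_of_not_mem hA h)⟩
  rw [IsResolvingPartition, Setoid.IsPartition, forall_nonempty_iff, and_assoc]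

lemma isResolvingPartition_range_singleton (hK : K.Connected) :
    IsResolvingPartition K (Set.range ({·} : α → Set α)) := by
  refine ⟨?_, fun v => ⟨{v}, ⟨⟨v, rfl⟩, rfl⟩, ?_⟩, fun u v h => ?_⟩
  · rintro _ ⟨x, rfl⟩
    exact Set.singleton_nonempty x
  · rintro _ ⟨⟨x, rfl⟩, rfl⟩
    rfl
  · exact (mem_of_setDist_eq hK (Set.mem_singleton u) (h {u} ⟨u, rfl⟩)).symm

lemma exists_ncard_eq_partitionDim (hK : K.Connected) :
    ∃ P : Set (Set α), IsResolvingPartition K P ∧ P.ncard = partitionDim K :=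
  Nat.sInf_mem (s := {t | ∃ P : Set (Set α), IsResolvingPartition K P ∧ P.ncard = t})
    ⟨_, _, isResolvingPartition_range_singleton hK, rfl⟩

lemma partitionDim_le_ncard (hP : IsResolvingPartition K P) : partitionDim K ≤ P.ncard :=
  Nat.sInf_le ⟨P, hP, rfl⟩

end ResolvingPartition

section Partition

variable {α β : Type*}

lemma isPartition_image_preimage {f : α → β} (hf : f.Surjective) {Q : Set (Set β)}
    (hQ : Setoid.IsPartition Q) : Setoid.IsPartition ((f ⁻¹' ·) '' Q) := by
  constructor
  · rintro ⟨B, hB, hfB⟩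
    exact ((Setoid.nonempty_of_mem_partition hQ hB).preimage hf).ne_empty hfB
  · intro a
    obtain ⟨B, ⟨hB, ha⟩, hunique⟩ := hQ.2 (f a)
    refine ⟨f ⁻¹' B, ⟨⟨B, hB, rfl⟩, ha⟩, ?_⟩
    rintro _ ⟨⟨B', hB', rfl⟩, ha'⟩
    exact congrArg (f ⁻¹' ·) (hunique B' ⟨hB', ha'⟩)

lemma isPartition_image_inl_union_image_inr {P : Set (Set α)} {Q : Set (Set β)}
    (hP : Setoid.IsPartition P) (hQ : Setoid.IsPartition Q) :
    Setoid.IsPartition ((Sum.inl '' ·) '' P ∪ (Sum.inr '' ·) '' Q : Set (Set (α ⊕ β))) := by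
  constructor
  · rintro (⟨A, hA, hempty⟩ | ⟨B, hB, hempty⟩)
    · exact ((Setoid.nonempty_of_mem_partition hP hA).image _).ne_empty hempty
    · exact ((Setoid.nonempty_of_mem_partition hQ hB).image _).ne_empty hempty
  · rintro (a | b)
    · obtain ⟨A, ⟨hA, ha⟩, hunique⟩ := hP.2 a
      refine ⟨Sum.inl '' A, ⟨.inl ⟨A, hA, rfl⟩, ⟨a, ha, rfl⟩⟩, ?_⟩
      rintro _ ⟨⟨A', hA', rfl⟩ | ⟨B, -, rfl⟩, hmem⟩
      · exact congrArg (Sum.inl '' ·) (hunique A' ⟨hA', by simpa using hmem⟩)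
      · simp at hmem
    · obtain ⟨B, ⟨hB, hb⟩, hunique⟩ := hQ.2 b
      refine ⟨Sum.inr '' B, ⟨.inr ⟨B, hB, rfl⟩, ⟨b, hb, rfl⟩⟩, ?_⟩
      rintro _ ⟨⟨A, -, rfl⟩ | ⟨B', hB', rfl⟩, hmem⟩
      · simp at hmem
      · exact congrArg (Sum.inr '' ·) (hunique B' ⟨hB', by simpa using hmem⟩)

end Partition

section Corona

variable {V W : Type*} {G : SimpleGraph V} {H : SimpleGraph W}

@[simp]
lemma corona_adj_inl_inl {a b : V} : (corona G H).Adj (Sum.inl a) (Sum.inl b) ↔ G.Adj a b := by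
  simpa [corona, G.adj_comm b a] using fun h : G.Adj a b => h.ne

@[simp]
lemma corona_adj_inl_inr {a : V} {p : V × W} :
    (corona G H).Adj (Sum.inl a) (Sum.inr p) ↔ a = p.1 := by
  simp [corona]

@[simp]
lemma corona_adj_inr_inl {a : V} {p : V × W} :
    (corona G H).Adj (Sum.inr p) (Sum.inl a) ↔ p.1 = a := by
  rw [adj_comm, corona_adj_inl_inr, eq_comm]

@[simp]
lemma corona_adj_inr_inr {p q : V × W} :
    (corona G H).Adj (Sum.inr p) (Sum.inr q) ↔ p.1 = q.1 ∧ H.Adj p.2 q.2 := by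
  simp only [corona, fromRel_adj, eq_comm (a := q.1), H.adj_comm q.2, or_self, ne_eq,
    Sum.inr.injEq, and_iff_right_iff_imp]
  rintro ⟨-, h⟩ rfl
  exact h.ne rfl

/-- The inclusion of the copy of `G` in `G ⊙ H`. -/
def coronaInl (G : SimpleGraph V) (H : SimpleGraph W) : G →g corona G H where
  toFun := Sum.inl
  map_rel' := corona_adj_inl_inl.2

/-- The inclusion of the copy of `H` attached to the vertex `a` in `G ⊙ H`. -/
def coronaInr (G : SimpleGraph V) (H : SimpleGraph W) (a : V) : H →g corona G H where
  toFun u := Sum.inr (a, u)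
  map_rel' h := corona_adj_inr_inr.2 ⟨rfl, h⟩

lemma corona_connected (hG : G.Connected) : (corona G H).Connected := by
  obtain ⟨a₀⟩ := hG.nonempty
  have reachable_inl (a : V) : (corona G H).Reachable (Sum.inl a₀) (Sum.inl a) :=
    (hG.preconnected a₀ a).map (coronaInl G H)
  refine connected_iff_exists_forall_reachable _ |>.2 ⟨Sum.inl a₀, ?_⟩
  rintro (a | p)
  · exact reachable_inl a
  · exact (reachable_inl p.1).trans (corona_adj_inl_inr.2 rfl).reachable

lemma sumElim_dist_le_corona_dist (hG : G.Connected) (x : V ⊕ V × W) (b : V) :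
    Sum.elim (G.dist · b) (fun p => G.dist p.1 b + 1) x ≤ (corona G H).dist x (Sum.inl b) := by
  set f : V ⊕ V × W → ℕ := Sum.elim (G.dist · b) (fun p => G.dist p.1 b + 1)
  have f_le_of_adj : ∀ x y, (corona G H).Adj x y → f x ≤ f y + 1 := by
    rintro (a | p) (c | q) hadj
    · have hac : G.dist a c = 1 := dist_eq_one_iff_adj.2 (corona_adj_inl_inl.1 hadj)
      have := hG.dist_triangle (u := a) (v := c) (w := b)
      simp only [f, Sum.elim_inl]
      lia
    · simp only [f, Sum.elim_inl, Sum.elim_inr, corona_adj_inl_inr.1 hadj]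
      lia
    · simp only [f, Sum.elim_inl, Sum.elim_inr, corona_adj_inr_inl.1 hadj, le_refl]
    · simp only [f, Sum.elim_inr, (corona_adj_inr_inr.1 hadj).1]
      lia
  simpa [f] using le_add_dist_of_forall_adj f_le_of_adj
    ((corona_connected hG).preconnected x (Sum.inl b))

lemma corona_dist_inl_inl (hG : G.Connected) (a b : V) :
    (corona G H).dist (Sum.inl a) (Sum.inl b) = G.dist a b :=
  le_antisymm (dist_map_le (coronaInl G H) (hG.preconnected a b))
    (sumElim_dist_le_corona_dist hG (Sum.inl a) b)

lemma corona_dist_inr_inl (hG : G.Connected) (p : V × W) (b : V) :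
    (corona G H).dist (Sum.inr p) (Sum.inl b) = G.dist p.1 b + 1 := by
  refine le_antisymm ?_ (sumElim_dist_le_corona_dist hG (Sum.inr p) b)
  have dist_root : (corona G H).dist (Sum.inr p) (Sum.inl p.1) = 1 :=
    dist_eq_one_iff_adj.2 (corona_adj_inr_inl.2 rfl)
  calc (corona G H).dist (Sum.inr p) (Sum.inl b)
      ≤ (corona G H).dist (Sum.inr p) (Sum.inl p.1)
        + (corona G H).dist (Sum.inl p.1) (Sum.inl b) := (corona_connected hG).dist_triangle
    _ = G.dist p.1 b + 1 := by rw [dist_root, corona_dist_inl_inl hG, add_comm]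

lemma corona_dist_inr_inr_le (G : SimpleGraph V) (a : V) {u w : W} (h : H.Reachable u w) :
    (corona G H).dist (Sum.inr (a, u)) (Sum.inr (a, w)) ≤ min (H.dist u w) 2 := by
  have hu : (corona G H).Adj (Sum.inr (a, u)) (Sum.inl a) := corona_adj_inr_inl.2 rfl
  have hw : (corona G H).Adj (Sum.inl a) (Sum.inr (a, w)) := corona_adj_inl_inr.2 rfl
  exact le_min (dist_map_le (coronaInr G H a) h) (dist_le (hu.toWalk.append hw.toWalk))

lemma min_dist_two_le_corona_dist_inr_inr (hG : G.Connected) (p q : V × W) :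
    min (H.dist p.2 q.2) 2 ≤ (corona G H).dist (Sum.inr p) (Sum.inr q) := by
  by_cases hpq : p = q
  · simp [hpq]
  by_cases hadj : (corona G H).Adj (Sum.inr p) (Sum.inr q)
  · rw [dist_eq_one_iff_adj.2 hadj, dist_eq_one_iff_adj.2 (corona_adj_inr_inr.1 hadj).2]
    exact min_le_left 1 2
  · exact min_le_of_right_le <|
      (corona_connected hG).one_lt_dist_of_ne_of_not_adj (Sum.inr_injective.ne hpq) hadj

lemma setDist_corona_inl_image_inl (hG : G.Connected) (a : V) (A : Set V) :
    setDist (corona G H) (Sum.inl a) (Sum.inl '' A) = setDist G a A := by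
  simp only [setDist, Set.image_image, corona_dist_inl_inl hG]

lemma setDist_corona_inr_image_inl (hG : G.Connected) (p : V × W) {A : Set V} (hA : A.Nonempty) :
    setDist (corona G H) (Sum.inr p) (Sum.inl '' A) = setDist G p.1 A + 1 := by
  apply le_antisymm
  · obtain ⟨b, hb, hdist⟩ := exists_dist_eq_setDist (K := G) p.1 hA
    rw [← hdist, ← corona_dist_inr_inl (H := H) hG]
    exact setDist_le_dist (Set.mem_image_of_mem _ hb)
  · rw [le_setDist_iff (hA.image _), Set.forall_mem_image]
    intro b hb
    rw [corona_dist_inr_inl hG]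
    exact Nat.add_le_add_right (setDist_le_dist hb) 1

lemma setDist_corona_inr_image_inr (hG : G.Connected) (hH : H.Connected) (p : V × W) {B : Set W}
    (hB : B.Nonempty) :
    setDist (corona G H) (Sum.inr p) (Sum.inr '' (Prod.snd ⁻¹' B)) =
      min (setDist H p.2 B) 2 := by
  obtain ⟨w, hw, hdist⟩ := exists_dist_eq_setDist (K := H) p.2 hB
  have mem_copies : (Sum.inr (p.1, w) : V ⊕ V × W) ∈ Sum.inr '' (Prod.snd ⁻¹' B) :=
    Set.mem_image_of_mem _ hw
  apply le_antisymm
  · rw [← hdist]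
    exact (setDist_le_dist mem_copies).trans
      (corona_dist_inr_inr_le G p.1 (hH.preconnected p.2 w))
  · rw [le_setDist_iff ⟨_, mem_copies⟩, Set.forall_mem_image]
    intro q hq
    exact (min_le_min_right 2 (setDist_le_dist (y := q.2) hq)).trans
      (min_dist_two_le_corona_dist_inr_inr hG p q)

/-- The partition of the vertices of `G ⊙ H` induced by partitions `P` of the vertices of `G` and
`Q` of the vertices of `H`: all copies of a cell of `Q` together form one cell. -/
def coronaPartition (P : Set (Set V)) (Q : Set (Set W)) : Set (Set (V ⊕ V × W)) :=
  (Sum.inl '' ·) '' P ∪ (Sum.inr '' ·) '' ((Prod.snd ⁻¹' ·) '' Q)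

lemma isPartition_coronaPartition [Nonempty V] {P : Set (Set V)} {Q : Set (Set W)}
    (hP : Setoid.IsPartition P) (hQ : Setoid.IsPartition Q) :
    Setoid.IsPartition (coronaPartition P Q) :=
  isPartition_image_inl_union_image_inr hP (isPartition_image_preimage Prod.snd_surjective hQ)

lemma ncard_coronaPartition_le {P : Set (Set V)} {Q : Set (Set W)} (hP : P.Finite)
    (hQ : Q.Finite) : (coronaPartition P Q).ncard ≤ P.ncard + Q.ncard :=
  (Set.ncard_union_le _ _).trans <| Nat.add_le_add (Set.ncard_image_le hP) <|
    (Set.ncard_image_le (hQ.image _)).trans (Set.ncard_image_le hQ)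

lemma not_forall_setDist_inl_eq_setDist_inr (hG : G.Connected) {P : Set (Set V)}
    (hP : Setoid.IsPartition P) (Q : Set (Set W)) (a : V) (p : V × W) :
    ¬ ∀ C ∈ coronaPartition P Q,
      setDist (corona G H) (Sum.inl a) C = setDist (corona G H) (Sum.inr p) C := by
  intro h
  obtain ⟨A, ⟨hA, ha⟩, -⟩ := hP.2 a
  have inr_mem : Sum.inr p ∈ Sum.inl '' A :=
    mem_of_setDist_eq (corona_connected hG) (Set.mem_image_of_mem _ ha) (h _ (.inl ⟨A, hA, rfl⟩))
  simp at inr_mem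

lemma isResolvingPartition_coronaPartition (hG : G.Connected) (hH : H.Connected)
    (hd : ∀ u w, H.dist u w ≤ 2) {P : Set (Set V)} {Q : Set (Set W)}
    (hP : IsResolvingPartition G P) (hQ : IsResolvingPartition H Q) :
    IsResolvingPartition (corona G H) (coronaPartition P Q) := by
  have := hG.nonempty
  obtain ⟨hPpart, hPres⟩ := isResolvingPartition_iff.1 hP
  obtain ⟨hQpart, hQres⟩ := isResolvingPartition_iff.1 hQ
  have setDist_copies (p : V × W) {B : Set W} (hB : B ∈ Q) :
      setDist (corona G H) (Sum.inr p) (Sum.inr '' (Prod.snd ⁻¹' B)) = setDist H p.2 B := by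
    obtain ⟨w, hw⟩ := hQ.1 B hB
    rw [setDist_corona_inr_image_inr hG hH p ⟨w, hw⟩,
      min_eq_left ((setDist_le_dist hw).trans (hd p.2 w))]
  refine isResolvingPartition_iff.2 ⟨isPartition_coronaPartition hPpart hQpart, ?_⟩
  rintro (a | p) (b | q) h
  · refine congrArg Sum.inl (hPres a b fun A hA => ?_)
    simpa only [setDist_corona_inl_image_inl hG] using h _ (.inl ⟨A, hA, rfl⟩)
  · exact absurd h (not_forall_setDist_inl_eq_setDist_inr hG hPpart Q a q)
  · exact absurd (fun C hC => (h C hC).symm)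
      (not_forall_setDist_inl_eq_setDist_inr hG hPpart Q b p)
  · refine congrArg Sum.inr (Prod.ext (hPres _ _ fun A hA => ?_) (hQres _ _ fun B hB => ?_))
    · simpa only [setDist_corona_inr_image_inl hG _ (hP.1 A hA), Nat.add_right_cancel_iff]
        using h _ (.inl ⟨A, hA, rfl⟩)
    · simpa only [setDist_copies _ hB] using h _ (.inr ⟨_, ⟨B, hB, rfl⟩, rfl⟩)

end Corona

/-- For connected graphs `G` and `H` of orders `n₁ ≥ 2` and `n₂ ≥ 2`, if the
diameter of `H` is at most `2`, then `pd(G⊙H) ≤ pd(G) + pd(H)`. -/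
theorem stmt3 {V W : Type*} [Fintype V] [Fintype W] (G : SimpleGraph V) (H : SimpleGraph W)
    (h₁ : 2 ≤ Fintype.card V) (h₂ : 2 ≤ Fintype.card W)
    (hG : G.Connected) (hH : H.Connected) (hd : H.diam ≤ 2) :
    partitionDim (corona G H) ≤ partitionDim G + partitionDim H := by
  have := hH.nonempty
  have dist_le_two (u w : W) : H.dist u w ≤ 2 :=
    (dist_le_diam (connected_iff_ediam_ne_top.1 hH)).trans hd
  obtain ⟨P, hP, hPcard⟩ := exists_ncard_eq_partitionDim hG
  obtain ⟨Q, hQ, hQcard⟩ := exists_ncard_eq_partitionDim hH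
  calc partitionDim (corona G H)
      ≤ (coronaPartition P Q).ncard :=
        partitionDim_le_ncard (isResolvingPartition_coronaPartition hG hH dist_le_two hP hQ)
    _ ≤ P.ncard + Q.ncard := ncard_coronaPartition_le P.toFinite Q.toFinite
    _ = partitionDim G + partitionDim H := by rw [hPcard, hQcard]
end
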